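/- Let u be an information structure on K × (C×C₁) × (D×D₁) and v = marg_{K×C×D}u. Suppose that under u the signal d₁ is ε-conditionally independent from (k, c) given d, and the signal c₁ is ε-conditionally independent from (k, d) given c. Then d(u,v) ≤ ε. -/

import Mathlib

open scoped BigOperators ENNReal

namespace ValueDistance

/-- An information structure: a probability distribution on `K × ℕ × ℕ`
(state, signal of player 1, signal of player 2). -/
abbrev InfoStruct (K : Type) := PMF (K × ℕ × ℕ)

/-- A behavior strategy / garbling : a map `ℕ → Δ(ℕ)`. -/
abbrev Garbling : Type := ℕ → PMF ℕ

variable {K : Type}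

/-- `g` is a payoff function with action bound `L` : values in `[-1,1]`,
`g k i j = -1` when `i ≥ L`, and `g k i j = 1` when `i < L` and `j ≥ L`. -/
def IsPayoffL (L : ℕ) (g : K → ℕ → ℕ → ℝ) : Prop :=
  (∀ k i j, g k i j ∈ Set.Icc (-1 : ℝ) 1) ∧
  (∀ k i j, L ≤ i → g k i j = -1) ∧
  (∀ k i j, i < L → L ≤ j → g k i j = 1)

/-- `g` belongs to the set `𝒢` of payoff functions. -/
def IsPayoff (g : K → ℕ → ℕ → ℝ) : Prop := ∃ L, IsPayoffL L g

/-- `g` belongs to the set `𝒢₁` of single-agent (player 1) problems. -/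
def IsPayoff1 (g : K → ℕ → ℕ → ℝ) : Prop :=
  IsPayoff g ∧ ∀ k i j j', g k i j = g k i j'

/-- Expected payoff in the Bayesian game `Γ(u,g)` when player 1 uses the behavior
strategy `σ` and player 2 uses `τ`. -/
noncomputable def payoff (u : InfoStruct K) (g : K → ℕ → ℕ → ℝ)
    (σ τ : Garbling) : ℝ :=
  ∑' (x : K × ℕ × ℕ) (i : ℕ) (j : ℕ),
    (u x).toReal * (σ x.2.1 i).toReal * (τ x.2.2 j).toReal * g x.1 i j

/-- The value `val(u,g)` of the zero-sum Bayesian game `Γ(u,g)`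
(the common value of `sup inf` and `inf sup` of the expected payoff;
we take `sup inf` as the definition). -/
noncomputable def val (u : InfoStruct K) (g : K → ℕ → ℕ → ℝ) : ℝ :=
  ⨆ σ : Garbling, ⨅ τ : Garbling, payoff u g σ τ

/-- Total variation distance `‖u − v‖`. -/
noncomputable def tv {α : Type} (u v : PMF α) : ℝ :=
  ∑' x : α, |(u x).toReal - (v x).toReal|

/-- `q.u` : player 1's signal garbled through `q`. -/
noncomputable def garbleLeft (q : Garbling) (u : InfoStruct K) : InfoStruct K :=
  u.bind (fun x => (q x.2.1).map (fun c => (x.1, c, x.2.2)))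

/-- `u.q` : player 2's signal garbled through `q`. -/
noncomputable def garbleRight (u : InfoStruct K) (q : Garbling) : InfoStruct K :=
  u.bind (fun x => (q x.2.2).map (fun d => (x.1, x.2.1, d)))

/-- The value-based distance `d(u,v) = sup_{g ∈ 𝒢} |val(u,g) − val(v,g)|`. -/
noncomputable def dVal (u v : InfoStruct K) : ℝ :=
  ⨆ g : {g : K → ℕ → ℕ → ℝ // IsPayoff g}, |val u g.1 - val v g.1|

/-- The single-agent distance `d₁(u,v) = sup_{g ∈ 𝒢₁} |val(u,g) − val(v,g)|`. -/
noncomputable def d1 (u v : InfoStruct K) : ℝ :=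
  ⨆ g : {g : K → ℕ → ℕ → ℝ // IsPayoff1 g}, |val u g.1 - val v g.1|

/-- Marginal of an information structure on `K × ℕ` (state, player 1's signal). -/
noncomputable def marg1 (u : InfoStruct K) : PMF (K × ℕ) :=
  u.map (fun x => (x.1, x.2.1))

/-- Garbling of a single-agent information structure:
`(q.w)(k,c) = Σ_s w(k,s)·q(s)({c})`. -/
noncomputable def garble1 (q : Garbling) (w : PMF (K × ℕ)) : PMF (K × ℕ) :=
  w.bind (fun x => (q x.2).map (fun c => (x.1, c)))

/-- Marginal of an information structure on the states. -/
noncomputable def margK (u : InfoStruct K) : PMF K := u.map Prod.fst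

/-- Marginal of an information structure on `K × ℕ` (state, player 2's signal). -/
noncomputable def margKD (u : InfoStruct K) : PMF (K × ℕ) :=
  u.map (fun x => (x.1, x.2.2))

/-- `σ.q` : on signal `c`, draw `c'` according to `q(c)` and play `σ(c')`. -/
noncomputable def compGarble (σ q : Garbling) : Garbling :=
  fun c => (q c).bind σ

/-- `u ∈ 𝒰(L)` : both players' signals are `< L` with probability 1. -/
def InU (L : ℕ) (u : InfoStruct K) : Prop :=
  ∀ x : K × ℕ × ℕ, u x ≠ 0 → x.2.1 < L ∧ x.2.2 < L

/-- `q ∈ 𝒬(L)` : garbling with values supported on `{0,…,L−1}`. -/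
def GarblingIn (L : ℕ) (q : Garbling) : Prop :=
  ∀ n m, q n m ≠ 0 → m < L

/-- The two players' signals are conditionally independent given the state:
`u(k)·u(k,c,d) = u(k,c)·u(k,d)` for all `k, c, d`
(equivalently `u(c,d|k) = u(c|k)·u(d|k)` whenever `u(k) > 0`). -/
def CondIndep (u : InfoStruct K) : Prop :=
  ∀ (k : K) (c d : ℕ),
    (∑' y : ℕ × ℕ, u (k, y)) * u (k, c, d)
      = (∑' d' : ℕ, u (k, c, d')) * (∑' c' : ℕ, u (k, c', d))

end ValueDistance

namespace ValueDistance

/-!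
A player who is given a garbled signal in one structure can be imitated in another structure by a
player who garbles the signal himself, so `val(u, g)` exceeds `val(v, g)` by at most the total
variation distance between a garbling of player 2's signal in `u` and a garbling of player 1's
signal in `v`.

Forgetting `c₁` turns the full structure into the law of `(k, c, (d, d₁))`. Redrawing `d₁` in the
marginal structure from its conditional law given `d` yields the same law with `d₁` made independent
of `(k, c)` given `d`. The total variation distance between the two is exactly the defect of
conditional independence, and exchanging the players gives the opposite bound.
-/

section Expectation

variable {α β : Type*}

/-- The expectation of a real function under a discrete law, as a sum: unlike a Bochner integral it
needs no measurable structure on `α`. It is junk when the series is not summable, so it is only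
applied to bounded functions. -/
noncomputable def expectation (p : PMF α) (f : α → ℝ) : ℝ := ∑' a, (p a).toReal * f a

lemma summable_toReal (p : PMF α) : Summable fun a => (p a).toReal :=
  ENNReal.summable_toReal p.tsum_coe_ne_top

lemma tsum_toReal (p : PMF α) : ∑' a, (p a).toReal = 1 := by
  rw [← ENNReal.tsum_toReal_eq p.apply_ne_top, p.tsum_coe, ENNReal.toReal_one]

lemma summable_mul_of_abs_le {h f : α → ℝ} {C : ℝ} (h_nonneg : ∀ a, 0 ≤ h a) (h_sum : Summable h)
    (hf : ∀ a, |f a| ≤ C) : Summable fun a => h a * f a := by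
  refine (h_sum.mul_right C).of_norm_bounded fun a => ?_
  rw [Real.norm_eq_abs, abs_mul, abs_of_nonneg (h_nonneg a)]
  exact mul_le_mul_of_nonneg_left (hf a) (h_nonneg a)

lemma summable_toReal_mul (p : PMF α) {f : α → ℝ} {C : ℝ} (hf : ∀ a, |f a| ≤ C) :
    Summable fun a => (p a).toReal * f a :=
  summable_mul_of_abs_le (fun _ => ENNReal.toReal_nonneg) (summable_toReal p) hf

lemma abs_expectation_le (p : PMF α) {f : α → ℝ} {C : ℝ} (hf : ∀ a, |f a| ≤ C) :
    |expectation p f| ≤ C := by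
  rw [← one_mul C, ← tsum_toReal p, ← tsum_mul_right, ← Real.norm_eq_abs]
  refine tsum_of_norm_bounded ((summable_toReal p).mul_right C).hasSum fun a => ?_
  rw [Real.norm_eq_abs, abs_mul, abs_of_nonneg ENNReal.toReal_nonneg]
  exact mul_le_mul_of_nonneg_left (hf a) ENNReal.toReal_nonneg

lemma expectation_pure (a : α) (f : α → ℝ) : expectation (PMF.pure a) f = f a := by
  classical
  rw [expectation, tsum_eq_single a fun b hb => by simp [hb]]
  simp

lemma summable_joint_toReal (p : PMF α) (q : α → PMF β) :
    Summable fun x : α × β => (p x.1).toReal * (q x.1 x.2).toReal := by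
  simp only [← ENNReal.toReal_mul]
  refine ENNReal.summable_toReal ?_
  simp [ENNReal.tsum_prod', ENNReal.tsum_mul_left]

lemma expectation_bind (p : PMF α) (q : α → PMF β) {f : β → ℝ} {C : ℝ} (hf : ∀ b, |f b| ≤ C) :
    expectation (p.bind q) f = expectation p fun a => expectation (q a) f := by
  have h_sum : Summable (Function.uncurry fun a b => (p a).toReal * (q a b).toReal * f b) :=
    summable_mul_of_abs_le (fun _ => by positivity) (summable_joint_toReal p q) fun x => hf x.2
  have bind_toReal (b : β) : (p.bind q b).toReal = ∑' a, (p a).toReal * (q a b).toReal := by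
    simp only [PMF.bind_apply, ← ENNReal.toReal_mul]
    exact ENNReal.tsum_toReal_eq fun a =>
      ENNReal.mul_ne_top (p.apply_ne_top a) ((q a).apply_ne_top b)
  calc expectation (p.bind q) f
      = ∑' b, ∑' a, (p a).toReal * (q a b).toReal * f b := by
        simp only [expectation, bind_toReal, tsum_mul_right]
    _ = ∑' a, ∑' b, (p a).toReal * (q a b).toReal * f b := h_sum.tsum_comm
    _ = expectation p fun a => expectation (q a) f := by
        simp only [expectation, mul_assoc, tsum_mul_left]

lemma expectation_map (p : PMF α) (t : α → β) {f : β → ℝ} {C : ℝ} (hf : ∀ b, |f b| ≤ C) :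
    expectation (p.map t) f = expectation p (f ∘ t) := by
  rw [PMF.map, expectation_bind p _ hf]
  simp only [Function.comp_def, expectation_pure]

lemma expectation_comm (p : PMF α) (q : PMF β) {f : α → β → ℝ} {C : ℝ}
    (hf : ∀ a b, |f a b| ≤ C) :
    (expectation p fun a => expectation q fun b => f a b) =
      expectation q fun b => expectation p fun a => f a b := by
  have hf' : ∀ x : α × β, |Function.uncurry f x| ≤ C := fun x => hf x.1 x.2
  have h := congrArg (expectation · (Function.uncurry f))
    (p.bind_comm q fun a b => PMF.pure (a, b))
  simpa only [expectation_bind _ _ hf', expectation_pure, Function.uncurry_apply_pair] using h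

end Expectation

section TotalVariation

variable {α β : Type}

lemma summable_abs_sub_toReal (p q : PMF α) : Summable fun a => |(p a).toReal - (q a).toReal| :=
  ((summable_toReal p).sub (summable_toReal q)).abs

lemma abs_expectation_sub_le_tv (p q : PMF α) {f : α → ℝ} {C : ℝ} (hf : ∀ a, |f a| ≤ C) :
    |expectation p f - expectation q f| ≤ C * tv p q := by
  rw [expectation, expectation,
    ← (summable_toReal_mul p hf).tsum_sub (summable_toReal_mul q hf), mul_comm, tv,
    ← tsum_mul_right, ← Real.norm_eq_abs]
  refine tsum_of_norm_bounded ((summable_abs_sub_toReal p q).mul_right C).hasSum fun a => ?_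
  rw [Real.norm_eq_abs, ← sub_mul, abs_mul]
  exact mul_le_mul_of_nonneg_left (hf a) (abs_nonneg _)

lemma tv_nonneg (p q : PMF α) : 0 ≤ tv p q := tsum_nonneg fun _ => abs_nonneg _

lemma tv_comm (p q : PMF α) : tv p q = tv q p := tsum_congr fun _ => abs_sub_comm _ _

end TotalVariation

section Marginals

variable {Ω X Y Z γ : Type*}

lemma map_apply_eq_toOuterMeasure (p : PMF Ω) (f : Ω → X) (x : X) :
    p.map f x = p.toOuterMeasure (f ⁻¹' {x}) := by
  rw [← PMF.toOuterMeasure_apply_singleton, PMF.toOuterMeasure_map_apply]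

lemma map_apply_eq_tsum_fiber (p : PMF Ω) {f : Ω → X} {x : X} (s : γ → Ω) (r : Ω → γ)
    (h_left : Function.LeftInverse r s) (h_mem : ∀ c, f (s c) = x)
    (h_right : ∀ ω, f ω = x → s (r ω) = ω) : p.map f x = ∑' c, p (s c) := by
  have h_range : f ⁻¹' {x} = Set.range s :=
    Set.Subset.antisymm (fun ω hω => ⟨r ω, h_right ω hω⟩) (Set.range_subset_iff.2 h_mem)
  rw [map_apply_eq_toOuterMeasure, PMF.toOuterMeasure_apply, h_range, ← tsum_subtype,
    tsum_range p h_left.injective]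

lemma map_apply_of_injective (p : PMF Ω) {e : Ω → X} (he : Function.Injective e) (ω : Ω) :
    p.map e (e ω) = p ω := by
  rw [map_apply_eq_toOuterMeasure, ← Set.image_singleton, he.preimage_image,
    PMF.toOuterMeasure_apply_singleton]

lemma map_prodMk_apply_eq_zero (p : PMF Ω) (ζ : Ω → Z) (ξ : Ω → X) {z : Z}
    (hz : p.map ζ z = 0) (x : X) : p.map (fun ω => (ζ ω, ξ ω)) (z, x) = 0 := by
  rw [PMF.apply_eq_zero_iff, PMF.mem_support_map_iff] at hz ⊢
  rintro ⟨ω, hω, h_eq⟩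
  exact hz ⟨ω, hω, congrArg Prod.fst h_eq⟩

lemma toOuterMeasure_filter_apply (p : PMF Ω) (s t : Set Ω) (h : ∃ ω ∈ s, ω ∈ p.support) :
    (p.filter s h).toOuterMeasure t = p.toOuterMeasure (t ∩ s) / p.toOuterMeasure s := by
  simp only [PMF.toOuterMeasure_apply, div_eq_mul_inv, ← ENNReal.tsum_mul_right,
    ← Set.indicator_indicator]
  refine tsum_congr fun ω => ?_
  by_cases hω : ω ∈ t
  · simp only [Set.indicator_of_mem hω, PMF.filter_apply]
  · simp only [Set.indicator_of_notMem hω, zero_mul]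

lemma bind_map_prodMk_apply (p : PMF Ω) (f : Ω → X) (κ : X → PMF Y) (x : X) (y : Y) :
    (p.bind fun ω => (κ (f ω)).map (Prod.mk (f ω))) (x, y) = p.map f x * κ x y := by
  have h_bind : (p.bind fun ω => (κ (f ω)).map (Prod.mk (f ω))) =
      (p.map f).bind fun x' => (κ x').map (Prod.mk x') := by
    rw [PMF.bind_map, Function.comp_def]
  rw [h_bind, PMF.bind_apply, tsum_eq_single x,
    map_apply_of_injective _ (Prod.mk_right_injective x)]
  intro x' hx'
  have h_notMem : (x, y) ∉ ((κ x').map (Prod.mk x')).support := by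
    rw [PMF.mem_support_map_iff]
    rintro ⟨_, -, h_eq⟩
    exact hx' (congrArg Prod.fst h_eq)
  rw [(PMF.apply_eq_zero_iff _ _).2 h_notMem, mul_zero]

end Marginals

lemma tv_map_of_injective {α β : Type} {e : α → β} (he : Function.Injective e) (p q : PMF α) :
    tv (p.map e) (q.map e) = tv p q := by
  have map_apply_eq_zero (r : PMF α) {b : β} (hb : b ∉ Set.range e) : r.map e b = 0 := by
    rw [PMF.apply_eq_zero_iff, PMF.support_map]
    exact fun h => hb (Set.image_subset_range _ _ h)
  rw [tv, ← he.tsum_eq, tv]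
  · simp only [map_apply_of_injective _ he]
  · intro b hb
    by_contra h_range
    exact hb (by simp only [map_apply_eq_zero _ h_range, sub_self, abs_zero])

section ConditionalIndependence

variable {Ω X Y Z : Type}

open Classical in
/-- The conditional law of `η` given `ζ = z` under `p`. On the null event `p(ζ = z) = 0` it is set
to the unconditional law of `η`, which is always a probability. -/
noncomputable def condLaw (p : PMF Ω) (η : Ω → Y) (ζ : Ω → Z) (z : Z) : PMF Y :=
  if h : ∃ ω ∈ ζ ⁻¹' {z}, ω ∈ p.support then (p.filter (ζ ⁻¹' {z}) h).map η else p.map η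

/-- The law of `(ζ, ξ, η')` under `p`, where `η'` is drawn from the conditional law of `η` given `ζ`
independently of everything else. -/
noncomputable def condIndepLaw (p : PMF Ω) (ξ : Ω → X) (η : Ω → Y) (ζ : Ω → Z) :
    PMF (Z × X × Y) :=
  p.bind fun ω => (condLaw p η ζ (ζ ω)).map fun y => (ζ ω, ξ ω, y)

/-- The least `ε` for which `ξ` and `η` are `ε`-conditionally independent given `ζ` under `p`. The
weight `p(z)` is multiplied into `|p(x, y | z) - p(x | z) p(y | z)|`, and a null `z` contributes
`0` because all the probabilities involved vanish. -/
noncomputable def condDependence (p : PMF Ω) (ξ : Ω → X) (η : Ω → Y) (ζ : Ω → Z) : ℝ :=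
  ∑' a : Z × X × Y, |(p.map (fun ω => (ζ ω, ξ ω, η ω)) a).toReal
    - (p.map (fun ω => (ζ ω, ξ ω)) (a.1, a.2.1)).toReal
      * (p.map (fun ω => (ζ ω, η ω)) (a.1, a.2.2)).toReal / (p.map ζ a.1).toReal|

lemma condLaw_apply (p : PMF Ω) (η : Ω → Y) (ζ : Ω → Z) {z : Z} (hz : p.map ζ z ≠ 0) (y : Y) :
    condLaw p η ζ z y = p.map (fun ω => (ζ ω, η ω)) (z, y) / p.map ζ z := by
  obtain ⟨ω, hω, hωz⟩ := (PMF.mem_support_map_iff _ _ _).1 hz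
  have h_fiber : (fun ω => (ζ ω, η ω)) ⁻¹' {(z, y)} = η ⁻¹' {y} ∩ ζ ⁻¹' {z} := by
    ext ω
    simp [and_comm]
  rw [condLaw, dif_pos ⟨ω, hωz, hω⟩]
  simp only [map_apply_eq_toOuterMeasure, toOuterMeasure_filter_apply, h_fiber]

lemma condIndepLaw_apply_toReal (p : PMF Ω) (ξ : Ω → X) (η : Ω → Y) (ζ : Ω → Z) (a : Z × X × Y) :
    (condIndepLaw p ξ η ζ a).toReal = (p.map (fun ω => (ζ ω, ξ ω)) (a.1, a.2.1)).toReal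
      * (p.map (fun ω => (ζ ω, η ω)) (a.1, a.2.2)).toReal / (p.map ζ a.1).toReal := by
  obtain ⟨z, x, y⟩ := a
  have h_assoc : condIndepLaw p ξ η ζ = (p.bind fun ω =>
      (condLaw p η ζ (ζ ω, ξ ω).1).map (Prod.mk (ζ ω, ξ ω))).map (Equiv.prodAssoc Z X Y) := by
    simp [condIndepLaw, PMF.map_bind, PMF.map_comp, Function.comp_def]
  have h_mul : condIndepLaw p ξ η ζ (z, x, y) =
      p.map (fun ω => (ζ ω, ξ ω)) (z, x) * condLaw p η ζ z y := by
    rw [h_assoc, ← Equiv.prodAssoc_apply Z X Y ((z, x), y),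
      map_apply_of_injective _ (Equiv.injective _)]
    exact bind_map_prodMk_apply p (fun ω => (ζ ω, ξ ω)) (fun b => condLaw p η ζ b.1) (z, x) y
  by_cases hz : p.map ζ z = 0
  · simp [h_mul, map_prodMk_apply_eq_zero p ζ ξ hz]
  · rw [h_mul, condLaw_apply p η ζ hz, ENNReal.toReal_mul, ENNReal.toReal_div, mul_div_assoc]

lemma tv_condIndepLaw (p : PMF Ω) (ξ : Ω → X) (η : Ω → Y) (ζ : Ω → Z) :
    tv (p.map fun ω => (ζ ω, ξ ω, η ω)) (condIndepLaw p ξ η ζ) = condDependence p ξ η ζ := by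
  simp only [tv, condDependence, condIndepLaw_apply_toReal]

lemma condDependence_eq_tsum {X₁ X₂ : Type} (p : PMF Ω) (ξ : Ω → X₁ × X₂) (η : Ω → Y)
    (ζ : Ω → Z) : condDependence p ξ η ζ = ∑' (z : Z) (x₁ : X₁) (x₂ : X₂) (y : Y),
      |(p.map (fun ω => (ζ ω, ξ ω, η ω)) (z, (x₁, x₂), y)).toReal
        - (p.map (fun ω => (ζ ω, ξ ω)) (z, (x₁, x₂))).toReal
          * (p.map (fun ω => (ζ ω, η ω)) (z, y)).toReal / (p.map ζ z).toReal| := by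
  have h_sum := summable_abs_sub_toReal (p.map fun ω => (ζ ω, ξ ω, η ω)) (condIndepLaw p ξ η ζ)
  simp only [condIndepLaw_apply_toReal] at h_sum
  rw [condDependence, h_sum.tsum_prod]
  refine tsum_congr fun z => ?_
  rw [(h_sum.prod_factor z).tsum_prod, (h_sum.prod_factor z).prod.tsum_prod]

end ConditionalIndependence

section Games

variable {K : Type} {g : K → ℕ → ℕ → ℝ} {C : ℝ}

lemma payoff_eq_expectation (u : InfoStruct K) (g : K → ℕ → ℕ → ℝ) (σ τ : Garbling) :
    payoff u g σ τ = expectation u fun x =>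
      expectation (σ x.2.1) fun i => expectation (τ x.2.2) fun j => g x.1 i j := by
  simp only [payoff, expectation, ← tsum_mul_left, mul_assoc]

lemma abs_expectation_expectation_le (hg : ∀ k i j, |g k i j| ≤ C) (k : K) (s t : PMF ℕ) :
    |expectation s fun i => expectation t fun j => g k i j| ≤ C :=
  abs_expectation_le _ fun i => abs_expectation_le _ fun j => hg k i j

lemma abs_payoff_le (u : InfoStruct K) (hg : ∀ k i j, |g k i j| ≤ C) (σ τ : Garbling) :
    |payoff u g σ τ| ≤ C := by
  rw [payoff_eq_expectation]
  exact abs_expectation_le _ fun x => abs_expectation_expectation_le hg _ _ _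

lemma abs_payoff_sub_le_tv (u v : InfoStruct K) (hg : ∀ k i j, |g k i j| ≤ C) (σ τ : Garbling) :
    |payoff u g σ τ - payoff v g σ τ| ≤ C * tv u v := by
  rw [payoff_eq_expectation, payoff_eq_expectation]
  exact abs_expectation_sub_le_tv u v fun x => abs_expectation_expectation_le hg _ _ _

lemma payoff_garbleLeft (q : Garbling) (u : InfoStruct K) (hg : ∀ k i j, |g k i j| ≤ C)
    (σ τ : Garbling) : payoff (garbleLeft q u) g σ τ = payoff u g (compGarble σ q) τ := by
  have hg_stage (x : K × ℕ × ℕ) := abs_expectation_expectation_le hg x.1 (σ x.2.1) (τ x.2.2)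
  rw [payoff_eq_expectation, payoff_eq_expectation, garbleLeft, expectation_bind _ _ hg_stage]
  congr 1 with x
  rw [expectation_map _ _ hg_stage, compGarble,
    expectation_bind _ _ fun i => abs_expectation_le (τ x.2.2) (hg x.1 i)]
  rfl

lemma payoff_garbleRight (u : InfoStruct K) (q : Garbling) (hg : ∀ k i j, |g k i j| ≤ C)
    (σ τ : Garbling) : payoff (garbleRight u q) g σ τ = payoff u g σ (compGarble τ q) := by
  have hg_stage (x : K × ℕ × ℕ) := abs_expectation_expectation_le hg x.1 (σ x.2.1) (τ x.2.2)
  rw [payoff_eq_expectation, payoff_eq_expectation, garbleRight, expectation_bind _ _ hg_stage]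
  congr 1 with x
  simp only [expectation_map _ _ hg_stage, compGarble, expectation_bind _ _ (hg x.1 _)]
  exact expectation_comm (q x.2.2) (σ x.2.1) fun d i => abs_expectation_le (τ d) (hg x.1 i)

lemma val_le_val_add (u v : InfoStruct K) (hg : ∀ k i j, |g k i j| ≤ C) {ε : ℝ}
    (h : ∀ σ, ∃ σ', ∀ τ, ∃ τ', payoff u g σ τ' ≤ payoff v g σ' τ + ε) :
    val u g ≤ val v g + ε := by
  have bddBelow (u : InfoStruct K) (σ : Garbling) :
      BddBelow (Set.range fun τ => payoff u g σ τ) :=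
    ⟨-C, Set.forall_mem_range.2 fun τ => (abs_le.1 (abs_payoff_le u hg σ τ)).1⟩
  have bddAbove : BddAbove (Set.range fun σ => ⨅ τ, payoff v g σ τ) :=
    ⟨C, Set.forall_mem_range.2 fun σ =>
      ciInf_le_of_le (bddBelow v σ) PMF.pure (abs_le.1 (abs_payoff_le v hg σ _)).2⟩
  have : Nonempty Garbling := ⟨PMF.pure⟩
  refine ciSup_le fun σ => ?_
  obtain ⟨σ', h_reply⟩ := h σ
  have inf_le : (⨅ τ, payoff u g σ τ) - ε ≤ ⨅ τ, payoff v g σ' τ := by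
    refine le_ciInf fun τ => ?_
    obtain ⟨τ', h_le⟩ := h_reply τ
    exact sub_le_iff_le_add.2 (ciInf_le_of_le (bddBelow u σ) τ' h_le)
  exact sub_le_iff_le_add.1 (inf_le.trans (le_ciSup bddAbove σ'))

lemma val_le_val_add_tv_garble (u v : InfoStruct K) (p q : Garbling)
    (hg : ∀ k i j, |g k i j| ≤ C) :
    val u g ≤ val v g + C * tv (garbleRight u p) (garbleLeft q v) := by
  refine val_le_val_add u v hg fun σ => ⟨compGarble σ q, fun τ => ⟨compGarble τ p, ?_⟩⟩
  rw [← payoff_garbleRight u p hg, ← payoff_garbleLeft q v hg, ← sub_le_iff_le_add']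
  exact (le_abs_self _).trans (abs_payoff_sub_le_tv _ _ hg σ τ)

lemma dVal_le_max_tv_garble (u v : InfoStruct K) (p q p' q' : Garbling) :
    dVal u v ≤ max (tv (garbleRight u p) (garbleLeft q v))
      (tv (garbleRight v p') (garbleLeft q' u)) := by
  refine Real.iSup_le ?_ (le_max_of_le_left (tv_nonneg _ _))
  rintro ⟨g, L, hg_mem, -, -⟩
  have hg : ∀ k i j, |g k i j| ≤ 1 := fun k i j => abs_le.2 (hg_mem k i j)
  have h_uv := val_le_val_add_tv_garble u v p q hg
  have h_vu := val_le_val_add_tv_garble v u p' q' hg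
  rw [one_mul, ← sub_le_iff_le_add'] at h_uv h_vu
  exact abs_sub_le_iff.2 ⟨le_max_of_le_left h_uv, le_max_of_le_right h_vu⟩

end Games

section JointInformation

variable {K : Type} (w : PMF (K × (ℕ × ℕ) × (ℕ × ℕ)))

/-- The information structure in which the players observe `(c, c₁)` and `(d, d₁)`. -/
noncomputable def jointInfo : InfoStruct K :=
  w.map fun x => (x.1, Nat.pair x.2.1.1 x.2.1.2, Nat.pair x.2.2.1 x.2.2.2)

/-- The marginal structure `marg_{K×C×D} w`, in which the players observe only `c` and `d`. -/
noncomputable def baseInfo : InfoStruct K := w.map fun x => (x.1, x.2.1.1, x.2.2.1)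

/-- The garbling that forgets the second component of an encoded pair of signals. -/
noncomputable def forgetSnd : Garbling := fun n => PMF.pure n.unpair.1

/-- The garbling that completes a signal `s`, a realization of `ζ`, to a pair by drawing the second
component from the conditional law of `η` given `ζ = s`. -/
noncomputable def drawSnd {Ω : Type} (p : PMF Ω) (η ζ : Ω → ℕ) : Garbling :=
  fun s => (condLaw p η ζ s).map (Nat.pair s)

lemma tv_garble_player1 :
    tv (garbleRight (jointInfo w) forgetSnd)
      (garbleLeft (drawSnd w (·.2.1.2) (·.2.1.1)) (baseInfo w)) =
    condDependence w (fun x => (x.1, x.2.2.1)) (·.2.1.2) (·.2.1.1) := by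
  let e : ℕ × (K × ℕ) × ℕ → K × ℕ × ℕ := fun a => (a.2.1.1, Nat.pair a.1 a.2.2, a.2.1.2)
  have he : Function.Injective e := by
    rintro ⟨c, ⟨k, d⟩, c₁⟩ ⟨c', ⟨k', d'⟩, c₁'⟩ h
    simp_all [e, Nat.pair_eq_pair]
  rw [← tv_condIndepLaw, ← tv_map_of_injective he]
  congr 1
  · simp only [garbleRight, jointInfo, forgetSnd, e, PMF.bind_map, PMF.map_comp, PMF.pure_map,
      Function.comp_def, Nat.unpair_pair]
    rfl
  · simp [garbleLeft, baseInfo, drawSnd, condIndepLaw, e, PMF.bind_map, PMF.map_bind, PMF.map_comp,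
      Function.comp_def]

lemma tv_garble_player2 :
    tv (garbleRight (baseInfo w) (drawSnd w (·.2.2.2) (·.2.2.1)))
      (garbleLeft forgetSnd (jointInfo w)) =
    condDependence w (fun x => (x.1, x.2.1.1)) (·.2.2.2) (·.2.2.1) := by
  let e : ℕ × (K × ℕ) × ℕ → K × ℕ × ℕ := fun a => (a.2.1.1, a.2.1.2, Nat.pair a.1 a.2.2)
  have he : Function.Injective e := by
    rintro ⟨d, ⟨k, c⟩, d₁⟩ ⟨d', ⟨k', c'⟩, d₁'⟩ h
    simp_all [e, Nat.pair_eq_pair]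
  rw [← tv_condIndepLaw, ← tv_map_of_injective he, tv_comm]
  congr 1
  · simp only [garbleLeft, jointInfo, forgetSnd, e, PMF.bind_map, PMF.map_comp, PMF.pure_map,
      Function.comp_def, Nat.unpair_pair]
    rfl
  · simp [garbleRight, baseInfo, drawSnd, condIndepLaw, e, PMF.bind_map, PMF.map_bind,
      PMF.map_comp, Function.comp_def]

lemma condDependence_player1_eq_tsum :
    condDependence w (fun x => (x.1, x.2.2.1)) (·.2.1.2) (·.2.1.1) =
      ∑' (c : ℕ) (k : K) (d : ℕ) (c₁ : ℕ),
        |(∑' d₁ : ℕ, w (k, (c, c₁), (d, d₁))).toReal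
          - (∑' (c₁' : ℕ) (d₁' : ℕ), w (k, (c, c₁'), (d, d₁'))).toReal
            * (∑' (k' : K) (d' : ℕ) (d₁' : ℕ), w (k', (c, c₁), (d', d₁'))).toReal
            / (∑' (k' : K) (c₁' : ℕ) (d' : ℕ) (d₁' : ℕ),
                w (k', (c, c₁'), (d', d₁'))).toReal| := by
  rw [condDependence_eq_tsum]
  refine tsum_congr fun c => tsum_congr fun k => tsum_congr fun d => tsum_congr fun c₁ => ?_
  rw [map_apply_eq_tsum_fiber w (fun d₁ => (k, (c, c₁), (d, d₁))) (·.2.2.2)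
      (fun _ => rfl) (fun _ => rfl) (by rintro _ ⟨⟩; rfl),
    map_apply_eq_tsum_fiber w (fun y : ℕ × ℕ => (k, (c, y.1), (d, y.2)))
      (fun x => (x.2.1.2, x.2.2.2)) (fun _ => rfl) (fun _ => rfl) (by rintro _ ⟨⟩; rfl),
    map_apply_eq_tsum_fiber w (fun y : K × ℕ × ℕ => (y.1, (c, c₁), y.2))
      (fun x => (x.1, x.2.2)) (fun _ => rfl) (fun _ => rfl) (by rintro _ ⟨⟩; rfl),
    map_apply_eq_tsum_fiber w (fun y : K × ℕ × ℕ × ℕ => (y.1, (c, y.2.1), y.2.2))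
      (fun x => (x.1, x.2.1.2, x.2.2)) (fun _ => rfl) (fun _ => rfl) (by rintro _ ⟨⟩; rfl)]
  simp only [ENNReal.tsum_prod']

lemma condDependence_player2_eq_tsum :
    condDependence w (fun x => (x.1, x.2.1.1)) (·.2.2.2) (·.2.2.1) =
      ∑' (d : ℕ) (k : K) (c : ℕ) (d₁ : ℕ),
        |(∑' c₁ : ℕ, w (k, (c, c₁), (d, d₁))).toReal
          - (∑' (c₁ : ℕ) (d₁' : ℕ), w (k, (c, c₁), (d, d₁'))).toReal
            * (∑' (k' : K) (c' : ℕ) (c₁' : ℕ), w (k', (c', c₁'), (d, d₁))).toReal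
            / (∑' (k' : K) (c' : ℕ) (c₁' : ℕ) (d₁' : ℕ),
                w (k', (c', c₁'), (d, d₁'))).toReal| := by
  rw [condDependence_eq_tsum]
  refine tsum_congr fun d => tsum_congr fun k => tsum_congr fun c => tsum_congr fun d₁ => ?_
  rw [map_apply_eq_tsum_fiber w (fun c₁ => (k, (c, c₁), (d, d₁))) (·.2.1.2)
      (fun _ => rfl) (fun _ => rfl) (by rintro _ ⟨⟩; rfl),
    map_apply_eq_tsum_fiber w (fun y : ℕ × ℕ => (k, (c, y.1), (d, y.2)))
      (fun x => (x.2.1.2, x.2.2.2)) (fun _ => rfl) (fun _ => rfl) (by rintro _ ⟨⟩; rfl),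
    map_apply_eq_tsum_fiber w (fun y : K × ℕ × ℕ => (y.1, y.2, (d, d₁)))
      (fun x => (x.1, x.2.1)) (fun _ => rfl) (fun _ => rfl) (by rintro _ ⟨⟩; rfl),
    map_apply_eq_tsum_fiber w
      (fun y : K × ℕ × ℕ × ℕ => (y.1, (y.2.1, y.2.2.1), (d, y.2.2.2)))
      (fun x => (x.1, x.2.1.1, x.2.1.2, x.2.2.2)) (fun _ => rfl) (fun _ => rfl)
      (by rintro _ ⟨⟩; rfl)]
  simp only [ENNReal.tsum_prod']

theorem joint_info_not_valuable_general :
    dVal (jointInfo w) (baseInfo w) ≤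
      max (condDependence w (fun x => (x.1, x.2.2.1)) (·.2.1.2) (·.2.1.1))
        (condDependence w (fun x => (x.1, x.2.1.1)) (·.2.2.2) (·.2.2.1)) := by
  rw [← tv_garble_player1, ← tv_garble_player2]
  exact dVal_le_max_tv_garble _ _ _ _ _ _

end JointInformation

/-- Value of joint information: if under `w ∈ Δ(K × (C×C₁) × (D×D₁))` the
signal `d₁` is `ε`-conditionally independent from `(k,c)` given `d`, and `c₁`
is `ε`-conditionally independent from `(k,d)` given `c`, then `d(u,v) ≤ ε`,
where `u` keeps everything (products encoded via `Nat.pair`) and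
`v = marg_{K×C×D} u`. -/
theorem joint_info_not_valuable (K : Type) [Fintype K]
    (hK : 2 ≤ Fintype.card K) (ε : ℝ) (w : PMF (K × (ℕ × ℕ) × (ℕ × ℕ)))
    (hd₁ : (∑' (d : ℕ) (k : K) (c : ℕ) (d₁ : ℕ),
        |(∑' c₁ : ℕ, w (k, (c, c₁), (d, d₁))).toReal
          - (∑' (c₁ : ℕ) (d₁' : ℕ), w (k, (c, c₁), (d, d₁'))).toReal
            * (∑' (k' : K) (c' : ℕ) (c₁' : ℕ), w (k', (c', c₁'), (d, d₁))).toReal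
            / (∑' (k' : K) (c' : ℕ) (c₁' : ℕ) (d₁' : ℕ),
                w (k', (c', c₁'), (d, d₁'))).toReal|) ≤ ε)
    (hc₁ : (∑' (c : ℕ) (k : K) (d : ℕ) (c₁ : ℕ),
        |(∑' d₁ : ℕ, w (k, (c, c₁), (d, d₁))).toReal
          - (∑' (c₁' : ℕ) (d₁' : ℕ), w (k, (c, c₁'), (d, d₁'))).toReal
            * (∑' (k' : K) (d' : ℕ) (d₁' : ℕ), w (k', (c, c₁), (d', d₁'))).toReal
            / (∑' (k' : K) (c₁' : ℕ) (d' : ℕ) (d₁' : ℕ),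
                w (k', (c, c₁'), (d', d₁'))).toReal|) ≤ ε) :
    dVal (w.map (fun x => (x.1, Nat.pair x.2.1.1 x.2.1.2, Nat.pair x.2.2.1 x.2.2.2)))
         (w.map (fun x => (x.1, x.2.1.1, x.2.2.1))) ≤ ε :=
  (joint_info_not_valuable_general w).trans <|
    max_le ((condDependence_player1_eq_tsum w).trans_le hc₁)
      ((condDependence_player2_eq_tsum w).trans_le hd₁)

end ValueDistance
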